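/- arXiv:1401.3315 — 5 statements merged into one kernel-verified Lean document; each statement's English description precedes it below -/
import Mathlib

section
/- Let α > −1 and β be real parameters and let J(x,y,z) denote the 3×3 Jacobian matrix of the vector field of system (18). Then the averaged matrix A = (1/(2π)) ∫₀^{2π} J(√(1+α) sin s, √(1+α) cos s, 0) ds equals ![![α(1+α), 1, 0], ![−1, α(1+α), 0], ![0, 0, β²]], and the eigenvalues of A over ℂ are β², α² + α + i, and α² + α − i; in particular the real parts of its eigenvalues are β², α² + α, α² + α. -/
open Real MeasureTheory

/-- The vector field of system (18). -/
noncomputable def vf18 (α β : ℝ) : (Fin 3 → ℝ) → (Fin 3 → ℝ) := fun v =>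
  ![v 1 + v 0 * (1 - v 0 ^ 2 - v 1 ^ 2) * (1 + α - v 0 ^ 2 - v 1 ^ 2),
    -v 0 + v 1 * (1 - v 0 ^ 2 - v 1 ^ 2) * (1 + α - v 0 ^ 2 - v 1 ^ 2),
    β ^ 2 * v 2 - v 2 ^ 3]

/-- The Jacobian matrix of a vector field on ℝ³: entry (i, j) is the partial derivative of
the i-th component with respect to the j-th coordinate. -/
noncomputable def jacobian (F : (Fin 3 → ℝ) → (Fin 3 → ℝ)) (p : Fin 3 → ℝ) :
    Matrix (Fin 3) (Fin 3) ℝ :=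
  Matrix.of fun i j => fderiv ℝ (fun v => F v i) p (Pi.single j 1)

/-- On the invariant cylinder `x² + y² = 1 + α` the last factor of the planar part vanishes, which
leaves a simple Jacobian. -/
theorem jacobian_vf18_of_sq_add_sq_eq (α β : ℝ) (p : Fin 3 → ℝ)
    (hp : p 0 ^ 2 + p 1 ^ 2 = 1 + α) :
    jacobian (vf18 α β) p =
      !![2 * α * p 0 ^ 2, 1 + 2 * α * (p 0 * p 1), 0;
         -1 + 2 * α * (p 0 * p 1), 2 * α * p 1 ^ 2, 0;
         0, 0, β ^ 2 - 3 * p 2 ^ 2] := by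
  have h0 := hasFDerivAt_apply (𝕜 := ℝ) (F' := fun _ : Fin 3 => ℝ) 0 p
  have h1 := hasFDerivAt_apply (𝕜 := ℝ) (F' := fun _ : Fin 3 => ℝ) 1 p
  have h2 := hasFDerivAt_apply (𝕜 := ℝ) (F' := fun _ : Fin 3 => ℝ) 2 p
  have hu := ((h0.pow 2).const_sub 1).sub (h1.pow 2)
  have hw := ((h0.pow 2).const_sub (1 + α)).sub (h1.pow 2)
  have hx := (h1.add ((h0.mul hu).mul hw)).fderiv
  have hy := (h0.neg.add ((h1.mul hu).mul hw)).fderiv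
  have hz := ((h2.const_mul (β ^ 2)).sub (h2.pow 3)).fderiv
  have hα : α = p 0 ^ 2 + p 1 ^ 2 - 1 := by linarith
  ext i j
  fin_cases i
  · refine (congrArg (fun L => L (Pi.single j 1)) hx).trans ?_
    fin_cases j <;> simp [hα] <;> ring
  · refine (congrArg (fun L => L (Pi.single j 1)) hy).trans ?_
    fin_cases j <;> simp [hα] <;> ring
  · refine (congrArg (fun L => L (Pi.single j 1)) hz).trans ?_
    fin_cases j <;> simp

/-- The characteristic polynomial of a rotation-scaling block plus a scalar splits over `ℂ`. -/
theorem charpoly_roots_rotation_block (a b : ℂ) :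
    (!![a, 1, 0; -1, a, 0; 0, 0, b] : Matrix (Fin 3) (Fin 3) ℂ).charpoly.roots =
      {b, a + Complex.I, a - Complex.I} := by
  have h : (!![a, 1, 0; -1, a, 0; 0, 0, b] : Matrix (Fin 3) (Fin 3) ℂ).charpoly =
      (({b, a + Complex.I, a - Complex.I} : Multiset ℂ).map
        fun c => Polynomial.X - Polynomial.C c).prod := by
    have hI : (Polynomial.C Complex.I) ^ 2 = (-1 : Polynomial ℂ) := by
      rw [← Polynomial.C_pow, Complex.I_sq]; simp
    simp [Matrix.charpoly, Matrix.charmatrix, Matrix.det_fin_three]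
    linear_combination (Polynomial.X - Polynomial.C b) * hI
  rw [h, Polynomial.roots_multiset_prod_X_sub_C]

theorem integral_sin_sq_zero_two_pi : ∫ s in (0 : ℝ)..(2 * π), sin s ^ 2 = π := by
  simp [integral_sin_sq]

theorem integral_cos_sq_zero_two_pi : ∫ s in (0 : ℝ)..(2 * π), cos s ^ 2 = π := by
  simp [integral_cos_sq]

/-- the averaged Jacobian along the limit cycle (ii) of system (18),
its explicit value, and its eigenvalues (with real parts β², α² + α, α² + α). -/
theorem stmt_5 (α β : ℝ) (hα : -1 < α) :
    ∀ A : Matrix (Fin 3) (Fin 3) ℝ,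
      (A = Matrix.of fun i j =>
        (2 * π)⁻¹ * ∫ s in (0:ℝ)..(2 * π),
          jacobian (vf18 α β)
            ![Real.sqrt (1 + α) * Real.sin s, Real.sqrt (1 + α) * Real.cos s, 0] i j) →
      A = !![α * (1 + α), 1, 0; -1, α * (1 + α), 0; 0, 0, β ^ 2] ∧
      (A.map (Complex.ofReal)).charpoly.roots =
        {(β : ℂ) ^ 2, (α : ℂ) ^ 2 + (α : ℂ) + Complex.I, (α : ℂ) ^ 2 + (α : ℂ) - Complex.I} ∧
      ((A.map (Complex.ofReal)).charpoly.roots.map Complex.re) =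
        {β ^ 2, α ^ 2 + α, α ^ 2 + α} := by
  intro A hA
  have hr : √(1 + α) ^ 2 = 1 + α := Real.sq_sqrt (by linarith)
  have hJ (s : ℝ) : jacobian (vf18 α β) ![√(1 + α) * sin s, √(1 + α) * cos s, 0] =
      !![2 * α * (1 + α) * sin s ^ 2, 1 + 2 * α * (1 + α) * (sin s * cos s), 0;
         -1 + 2 * α * (1 + α) * (sin s * cos s), 2 * α * (1 + α) * cos s ^ 2, 0;
         0, 0, β ^ 2] := by
    rw [jacobian_vf18_of_sq_add_sq_eq]
    · ext i j
      fin_cases i <;> fin_cases j <;> simp [mul_pow, hr] <;>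
        first | ring1 | linear_combination 2 * α * sin s * cos s * hr
    · simp only [Matrix.cons_val_zero, Matrix.cons_val_one, mul_pow, hr]
      linear_combination (1 + α) * sin_sq_add_cos_sq s
  have hsc : IntervalIntegrable (fun s => 2 * α * (1 + α) * (sin s * cos s)) volume 0 (2 * π) :=
    (by fun_prop : Continuous _).intervalIntegrable _ _
  have hA' : A = !![α * (1 + α), 1, 0; -1, α * (1 + α), 0; 0, 0, β ^ 2] := by
    have hπ := Real.pi_ne_zero
    simp only [hJ] at hA
    rw [hA]
    ext i j
    fin_cases i <;> fin_cases j <;>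
      simp [-integral_sin_sq, -integral_cos_sq, integral_sin_sq_zero_two_pi,
        integral_cos_sq_zero_two_pi,
        intervalIntegral.integral_add intervalIntegrable_const hsc,
        intervalIntegral.integral_const_mul] <;> field_simp
  have hroots : (A.map Complex.ofReal).charpoly.roots =
      {(β : ℂ) ^ 2, (α : ℂ) ^ 2 + (α : ℂ) + Complex.I, (α : ℂ) ^ 2 + (α : ℂ) - Complex.I} := by
    rw [← charpoly_roots_rotation_block, hA']
    congr 2
    ext i j
    fin_cases i <;> fin_cases j <;> simp <;> ring
  refine ⟨hA', hroots, ?_⟩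
  rw [hroots]
  simp [← Complex.ofReal_pow]
end

section
/- Let α, β be real parameters and let J(x,y,z) denote the 3×3 Jacobian matrix of the vector field of system (18). Then for either sign ε = ±1, the averaged matrix A = (1/(2π)) ∫₀^{2π} J(sin s, cos s, εβ) ds equals ![![−α, 1, 0], ![−1, −α, 0], ![0, 0, −2β²]], and the eigenvalues of A over ℂ are −2β², −α + i, and −α − i; in particular the real parts of its eigenvalues are −2β², −α, −α. -/
open Real MeasureTheory

/-- The Jacobian of `vf18` at a point of the unit cylinder `x ^ 2 + y ^ 2 = 1`. -/
theorem jacobian_vf18_of_sq_add_sq_eq_one (α β : ℝ) {x y : ℝ} (z : ℝ) (h : x ^ 2 + y ^ 2 = 1) :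
    jacobian (vf18 α β) ![x, y, z] =
      !![-2 * α * x ^ 2, 1 - 2 * α * (x * y), 0;
        -1 - 2 * α * (x * y), -2 * α * y ^ 2, 0;
        0, 0, β ^ 2 - 3 * z ^ 2] := by
  have hd (k : Fin 3) : HasFDerivAt (fun v : Fin 3 → ℝ => v k)
      (ContinuousLinearMap.proj (R := ℝ) (φ := fun _ : Fin 3 => ℝ) k) ![x, y, z] :=
    (ContinuousLinearMap.proj (R := ℝ) (φ := fun _ : Fin 3 => ℝ) k).hasFDerivAt
  have hr := (((hd 0).pow 2).const_sub 1).sub ((hd 1).pow 2)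
  have hs := (((hd 0).pow 2).const_sub (1 + α)).sub ((hd 1).pow 2)
  have h0 := ((hd 1).add (((hd 0).mul hr).mul hs)).fderiv
  have h1 := ((hd 0).neg.add (((hd 1).mul hr).mul hs)).fderiv
  have h2 := (((hd 2).const_mul (β ^ 2)).sub ((hd 2).pow 3)).fderiv
  ext i j
  fin_cases i
  · refine (congrArg (fun L => L (Pi.single j 1)) h0).trans ?_
    fin_cases j <;> simp <;> grind
  · refine (congrArg (fun L => L (Pi.single j 1)) h1).trans ?_
    fin_cases j <;> simp <;> grind
  · refine (congrArg (fun L => L (Pi.single j 1)) h2).trans ?_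
    fin_cases j <;> simp

/-- the averaged Jacobian along the limit cycles (iii) and (iv) of system (18),
its explicit value, and its eigenvalues (with real parts −2β², −α, −α). -/
theorem stmt_6 (α β : ℝ) :
    ∀ ε : ℝ, ε = 1 ∨ ε = -1 →
    ∀ A : Matrix (Fin 3) (Fin 3) ℝ,
      (A = Matrix.of fun i j =>
        (2 * π)⁻¹ * ∫ s in (0:ℝ)..(2 * π),
          jacobian (vf18 α β) ![Real.sin s, Real.cos s, ε * β] i j) →
      A = !![-α, 1, 0; -1, -α, 0; 0, 0, -2 * β ^ 2] ∧
      (A.map (Complex.ofReal)).charpoly.roots =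
        {-2 * (β : ℂ) ^ 2, -(α : ℂ) + Complex.I, -(α : ℂ) - Complex.I} ∧
      ((A.map (Complex.ofReal)).charpoly.roots.map Complex.re) = {-2 * β ^ 2, -α, -α} := by
  intro ε hε A hA
  have hA' : A = !![-α, 1, 0; -1, -α, 0; 0, 0, -2 * β ^ 2] := by
    have hJ (s : ℝ) := jacobian_vf18_of_sq_add_sq_eq_one α β (ε * β) (Real.sin_sq_add_cos_sq s)
    have hε2 : ε ^ 2 = 1 := by rcases hε with rfl | rfl <;> norm_num
    have hsc : ∫ s in (0 : ℝ)..(2 * π), Real.sin s * Real.cos s = 0 := by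
      simp [integral_sin_mul_cos₁]
    have hint : IntervalIntegrable (fun s => 2 * α * (Real.sin s * Real.cos s)) volume
        0 (2 * π) := (by fun_prop : Continuous _).intervalIntegrable _ _
    rw [hA]
    ext i j
    simp only [hJ]
    fin_cases i <;> fin_cases j <;>
      simp [intervalIntegral.integral_sub, hint, hsc, integral_sin_sq, integral_cos_sq] <;>
      field_simp
    linear_combination (-3 * β ^ 2) * hε2
  have hroots : (A.map Complex.ofReal).charpoly.roots =
      {-2 * (β : ℂ) ^ 2, -(α : ℂ) + Complex.I, -(α : ℂ) - Complex.I} := by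
    rw [← charpoly_roots_rotation_block, hA']
    congr 2
    ext i j
    fin_cases i <;> fin_cases j <;> simp
  refine ⟨hA', hroots, ?_⟩
  rw [hroots]
  simp [← Complex.ofReal_pow]
end

section
/- Let B be the real 3×3 matrix ![![−1, 0, 0], ![0, −2, 1], ![0, −1, −3]]. Then the eigenvalues of B over ℂ are −1, (−5 + i√3)/2, and (−5 − i√3)/2, so the real parts of the eigenvalues of B are −1, −5/2, −5/2, whereas the symmetrized matrix (B + Bᵀ)/2 equals the diagonal matrix diag(−1, −2, −3) and has eigenvalues −1, −2, −3. -/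
open Polynomial in
/-- A polynomial written as a product of three monic linear factors has the expected roots. -/
theorem roots_eq_of_eq_prod_three {R : Type*} [CommRing R] [IsDomain R] {p : R[X]} {a b c : R}
    (h : p = (X - C a) * (X - C b) * (X - C c)) : p.roots = {a, b, c} := by
  have hp : p = (({a, b, c} : Multiset R).map fun r => X - C r).prod := by
    simp [h, mul_assoc]
  rw [hp, roots_multiset_prod_X_sub_C]

open Polynomial in
/-- The characteristic polynomial of a block diagonal matrix with blocks of sizes one and two factors
according to any factorization of the quadratic block. -/
theorem charpoly_one_two_block {R : Type*} [CommRing R] {a b c d e s t : R}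
    (hsum : s + t = b + e) (hprod : s * t = b * e - c * d) :
    (!![a, 0, 0; 0, b, c; 0, d, e] : Matrix (Fin 3) (Fin 3) R).charpoly =
      (X - C a) * (X - C s) * (X - C t) := by
  have hs : C s + C t = C b + C e := by simp only [← C_add, hsum]
  have hp : C s * C t = C b * C e - C c * C d := by simp only [← C_mul, ← C_sub, hprod]
  rw [Matrix.charpoly, Matrix.det_fin_three]
  simp
  linear_combination (X - C a) * X * hs - (X - C a) * hp

/-- eigenvalues of B = ![![−1,0,0],![0,−2,1],![0,−1,−3]] are −1, (−5 ± i√3)/2,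
with real parts −1, −5/2, −5/2, while (B + Bᵀ)/2 = diag(−1,−2,−3) with eigenvalues −1,−2,−3. -/
theorem stmt_11 :
    ∀ B : Matrix (Fin 3) (Fin 3) ℝ,
      B = !![-1, 0, 0; 0, -2, 1; 0, -1, -3] →
      (B.map (Complex.ofReal)).charpoly.roots =
        {(-1 : ℂ), (-5 + Complex.I * Real.sqrt 3) / 2, (-5 - Complex.I * Real.sqrt 3) / 2} ∧
      ((B.map (Complex.ofReal)).charpoly.roots.map Complex.re) =
        {(-1 : ℝ), -5 / 2, -5 / 2} ∧
      (1 / 2 : ℝ) • (B + B.transpose) = Matrix.diagonal ![-1, -2, -3] ∧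
      ((((1 / 2 : ℝ) • (B + B.transpose)).map (Complex.ofReal)).charpoly.roots) =
        {(-1 : ℂ), -2, -3} := by
  rintro B rfl
  have hsq : (Real.sqrt 3 : ℂ) ^ 2 = 3 := by
    rw [← Complex.ofReal_pow, Real.sq_sqrt (by norm_num)]
    norm_num
  have hB : (!![-1, 0, 0; 0, -2, 1; 0, -1, -3] : Matrix (Fin 3) (Fin 3) ℝ).map Complex.ofReal =
      !![-1, 0, 0; 0, -2, 1; 0, -1, -3] := by
    ext i j
    fin_cases i <;> fin_cases j <;> simp
  have hroots := roots_eq_of_eq_prod_three (charpoly_one_two_block (R := ℂ) (a := -1) (b := -2)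
    (c := 1) (d := -1) (e := -3) (s := (-5 + Complex.I * Real.sqrt 3) / 2)
    (t := (-5 - Complex.I * Real.sqrt 3) / 2) (by ring)
    (by linear_combination (-(Real.sqrt 3 : ℂ) ^ 2 / 4) * Complex.I_sq + hsq / 4))
  have hsym : (1 / 2 : ℝ) • ((!![-1, 0, 0; 0, -2, 1; 0, -1, -3] : Matrix (Fin 3) (Fin 3) ℝ) +
      (!![-1, 0, 0; 0, -2, 1; 0, -1, -3] : Matrix (Fin 3) (Fin 3) ℝ).transpose) =
      Matrix.diagonal ![-1, -2, -3] := by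
    ext i j
    fin_cases i <;> fin_cases j <;> norm_num [Matrix.diagonal]
  have hD : (Matrix.diagonal ![-1, -2, -3] : Matrix (Fin 3) (Fin 3) ℝ).map Complex.ofReal =
      !![-1, 0, 0; 0, -2, 0; 0, 0, -3] := by
    ext i j
    fin_cases i <;> fin_cases j <;> simp
  refine ⟨by rw [hB, hroots], ?_, hsym, ?_⟩
  · rw [hB, hroots]
    simp
  · rw [hsym, hD]
    exact roots_eq_of_eq_prod_three (charpoly_one_two_block rfl (by ring))
end

section
/- Let −1 < α < 0 and let u : ℝ → ℝ be a differentiable function satisfying u'(t) = 2u(t)(1 − u(t))(1 + α − u(t)) for all t ≥ 0, with 0 < u(0) < 1. Then u(t) ∈ (0, 1) for all t ≥ 0 and u(t) → 1 + α as t → +∞. -/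
open Filter

/-- A solution on `[0, ∞)` of the linear equation `v' = g v` with `g` continuous. -/
lemma eq_mul_exp_integral_of_hasDerivAt {v g : ℝ → ℝ} (hg : Continuous g)
    (hv : ∀ t, 0 ≤ t → HasDerivAt v (g t * v t) t) {t : ℝ} (ht : 0 ≤ t) :
    v t = v 0 * Real.exp (∫ s in (0 : ℝ)..t, g s) := by
  have hder : ∀ x, 0 ≤ x →
      HasDerivAt (fun x => v x * Real.exp (-∫ s in (0 : ℝ)..x, g s)) 0 x := by
    intro x hx
    have hG := (hg.integral_hasStrictDerivAt 0 x).hasDerivAt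
    exact ((hv x hx).mul hG.neg.exp).congr_deriv (by simp only [Pi.neg_apply]; ring)
  have hconst := constant_of_has_deriv_right_zero (a := 0) (b := t)
    (fun x hx => (hder x hx.1).continuousAt.continuousWithinAt)
    (fun x hx => (hder x hx.1).hasDerivWithinAt) t ⟨ht, le_rfl⟩
  simp only [intervalIntegral.integral_same, neg_zero, Real.exp_zero, mul_one] at hconst
  rw [← hconst, mul_assoc, ← Real.exp_add, neg_add_cancel, Real.exp_zero, mul_one]

/-- for −1 < α < 0, a solution of u' = 2u(1 − u)(1 + α − u) with
0 < u(0) < 1 stays in (0, 1) for t ≥ 0 and tends to 1 + α as t → +∞. -/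
theorem stmt_17 (α : ℝ) (hα₁ : -1 < α) (hα₂ : α < 0) (u : ℝ → ℝ) (hu : Differentiable ℝ u)
    (hODE : ∀ t : ℝ, 0 ≤ t →
      deriv u t = 2 * u t * (1 - u t) * (1 + α - u t))
    (h0 : 0 < u 0) (h1 : u 0 < 1) :
    (∀ t : ℝ, 0 ≤ t → u t ∈ Set.Ioo (0 : ℝ) 1) ∧
    Tendsto u atTop (nhds (1 + α)) := by
  have hc : Continuous u := hu.continuous
  have hd : ∀ t, 0 ≤ t → HasDerivAt u (2 * u t * (1 - u t) * (1 + α - u t)) t :=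
    fun t ht => hODE t ht ▸ (hu t).hasDerivAt
  have hmem : ∀ t : ℝ, 0 ≤ t → u t ∈ Set.Ioo (0 : ℝ) 1 := by
    intro t ht
    have hpos := eq_mul_exp_integral_of_hasDerivAt (v := u)
      (g := fun s => 2 * (1 - u s) * (1 + α - u s)) (by fun_prop)
      (fun s hs => by convert hd s hs using 1; ring) ht
    have hlt := eq_mul_exp_integral_of_hasDerivAt (v := fun s => 1 - u s)
      (g := fun s => -(2 * u s * (1 + α - u s))) (by fun_prop)
      (fun s hs => ((hd s hs).const_sub 1).congr_deriv (by ring)) ht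
    refine ⟨hpos ▸ mul_pos h0 (Real.exp_pos _), sub_pos.mp ?_⟩
    exact hlt ▸ mul_pos (sub_pos.mpr h1) (Real.exp_pos _)
  refine ⟨hmem, ?_⟩
  have hdist : ∀ t, 0 ≤ t → u t - (1 + α) =
      (u 0 - (1 + α)) * Real.exp (∫ s in (0 : ℝ)..t, -(2 * u s * (1 - u s))) := fun t ht =>
    eq_mul_exp_integral_of_hasDerivAt (v := fun s => u s - (1 + α)) (by fun_prop)
      (fun s hs => ((hd s hs).sub_const (1 + α)).congr_deriv (by ring)) ht
  have hexp : ∀ t, 0 ≤ t →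
      Real.exp (∫ s in (0 : ℝ)..t, -(2 * u s * (1 - u s))) ≤ 1 := by
    intro t ht
    rw [Real.exp_le_one_iff, intervalIntegral.integral_neg, neg_nonpos]
    refine intervalIntegral.integral_nonneg ht fun s hs => ?_
    obtain ⟨hs0, hs1⟩ := hmem s hs.1
    exact mul_nonneg (by linarith) (by linarith)
  obtain ⟨m, hm, hmu, hmα⟩ : ∃ m, 0 < m ∧ m ≤ u 0 ∧ m ≤ 1 + α :=
    ⟨min (u 0) (1 + α), lt_min h0 (by linarith), min_le_left _ _, min_le_right _ _⟩
  obtain ⟨M, hM, hMu, hMα⟩ : ∃ M, M < 1 ∧ u 0 ≤ M ∧ 1 + α ≤ M :=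
    ⟨max (u 0) (1 + α), max_lt h1 (by linarith), le_max_left _ _, le_max_right _ _⟩
  have hbounds : ∀ t, 0 ≤ t → m ≤ u t ∧ u t ≤ M := by
    intro t ht
    have heq := hdist t ht
    have hle := hexp t ht
    have hpos := Real.exp_pos (∫ s in (0 : ℝ)..t, -(2 * u s * (1 - u s)))
    constructor <;> nlinarith
  have hrate : 0 < 2 * m * (1 - M) := mul_pos (by linarith) (by linarith)
  have hint : ∀ t, 0 ≤ t →
      ∫ s in (0 : ℝ)..t, -(2 * u s * (1 - u s)) ≤ -(2 * m * (1 - M) * t) := by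
    intro t ht
    calc ∫ s in (0 : ℝ)..t, -(2 * u s * (1 - u s))
        ≤ ∫ _ in (0 : ℝ)..t, -(2 * m * (1 - M)) := by
          refine intervalIntegral.integral_mono_on ht
            (Continuous.intervalIntegrable (by fun_prop) _ _)
            (Continuous.intervalIntegrable (by fun_prop) _ _) fun s hs => ?_
          obtain ⟨hs0, hs1⟩ := hbounds s hs.1
          have := mul_le_mul hs0 (sub_le_sub_left hs1 1) (by linarith) (by linarith)
          linarith
      _ = -(2 * m * (1 - M) * t) := by
          rw [intervalIntegral.integral_const, smul_eq_mul]; ring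
  have hlim : Tendsto (fun t => |u 0 - (1 + α)| * Real.exp (-(2 * m * (1 - M) * t)))
      atTop (nhds 0) := by
    simpa using (Real.tendsto_exp_neg_atTop_nhds_zero.comp
      (tendsto_id.const_mul_atTop hrate)).const_mul |u 0 - (1 + α)|
  rw [tendsto_iff_norm_sub_tendsto_zero]
  refine squeeze_zero' (Eventually.of_forall fun t => norm_nonneg _) ?_ hlim
  filter_upwards [eventually_ge_atTop 0] with t ht
  rw [hdist t ht, Real.norm_eq_abs, abs_mul, Real.abs_exp]
  gcongr
  exact hint t ht
end

section
/- Let β be a real parameter and let (x, y, z) : ℝ → ℝ³ be a differentiable solution of system (19). Then u(t) = x(t)² + y(t)² satisfies u'(t) = 2u(t)(1 − u(t))³ for all t. Moreover, if u : ℝ → ℝ is any differentiable function satisfying u'(t) = 2u(t)(1 − u(t))³ for all t ≥ 0 with u(0) > 0, then u(t) → 1 as t → +∞. -/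
open Filter

/-- A solution of `u' = 2u(1 - u)³` starting at or above a level `c ∈ (0, 1)` never falls
below it. -/
lemma le_of_deriv_eq_two_mul_mul_one_sub_pow {u : ℝ → ℝ} (hd : Differentiable ℝ u)
    (hu : ∀ t : ℝ, 0 ≤ t → deriv u t = 2 * u t * (1 - u t) ^ 3) {c : ℝ} (hc : 0 < c)
    (hc1 : c < 1) (h0 : c ≤ u 0) {t : ℝ} (ht : 0 ≤ t) : c ≤ u t := by
  have h : -u t ≤ -c := by
    refine image_le_of_deriv_right_lt_deriv_boundary (f := fun s => -u s)
      (f' := fun s => -deriv u s) (B := fun _ => -c) (B' := fun _ => 0) (a := 0) (b := t)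
      hd.continuous.neg.continuousOn (fun s _ => (hd s).hasDerivAt.neg.hasDerivWithinAt)
      (neg_le_neg h0) (fun s => hasDerivAt_const s _) (fun s hs hsc => ?_) ⟨ht, le_rfl⟩
    have hsc' : u s = c := neg_injective hsc
    have hpos : 0 < (1 - c) ^ 3 := pow_pos (sub_pos.mpr hc1) 3
    simp only [hu s hs.1, hsc']
    rw [neg_lt_zero]
    positivity
  exact neg_le_neg_iff.mp h

/-- The squared distance to `1` of a solution of `u' = 2u(1 - u)³` that stays above `c > 0`
decays at least like `1 / (1 + t)`. -/
lemma one_sub_sq_le_div_of_deriv_eq {u : ℝ → ℝ} (hd : Differentiable ℝ u)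
    (hu : ∀ t : ℝ, 0 ≤ t → deriv u t = 2 * u t * (1 - u t) ^ 3) {c K : ℝ}
    (hc : ∀ t : ℝ, 0 ≤ t → c ≤ u t) (hK : 0 < K) (hcK : 1 < 4 * c * K)
    (h0 : (1 - u 0) ^ 2 ≤ K) {t : ℝ} (ht : 0 ≤ t) : (1 - u t) ^ 2 ≤ K / (1 + t) := by
  have hder (s : ℝ) : HasDerivAt (fun s => (1 - u s) ^ 2) (2 * (1 - u s) * -deriv u s) s := by
    simpa using ((hd s).hasDerivAt.const_sub 1).fun_pow 2
  have hB (s : ℝ) (hs : 0 ≤ s) : HasDerivAt (fun s => K / (1 + s)) (-K / (1 + s) ^ 2) s := by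
    have hs1 : 1 + s ≠ 0 := by positivity
    simpa using (hasDerivAt_const s K).fun_div ((hasDerivAt_id s).const_add 1) hs1
  refine image_le_of_deriv_right_lt_deriv_boundary' (f := fun s => (1 - u s) ^ 2)
    (B := fun s => K / (1 + s)) (a := 0) (b := t)
    (fun s _ => (hder s).continuousAt.continuousWithinAt)
    (fun s _ => (hder s).hasDerivWithinAt) (by simpa using h0)
    (fun s hs => (hB s hs.1).continuousAt.continuousWithinAt)
    (fun s hs => (hB s hs.1).hasDerivWithinAt) (fun s hs hsK => ?_) ⟨ht, le_rfl⟩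
  have hs1 : 0 < 1 + s := by linarith [hs.1]
  calc 2 * (1 - u s) * -deriv u s = -(4 * u s * ((1 - u s) ^ 2) ^ 2) := by
        rw [hu s hs.1]; ring
    _ ≤ -(4 * c * ((1 - u s) ^ 2) ^ 2) := by
        gcongr
        exact hc s hs.1
    _ = -(4 * c * K * K) / (1 + s) ^ 2 := by
        rw [show (1 - u s) ^ 2 = K / (1 + s) from hsK]; field_simp
    _ < -K / (1 + s) ^ 2 := by
        gcongr
        nlinarith

/-- Every solution of `u' = 2u(1 - u)³` with `u 0 > 0` converges to `1`. -/
lemma tendsto_one_of_deriv_eq_two_mul_mul_one_sub_pow {u : ℝ → ℝ} (hd : Differentiable ℝ u)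
    (hu : ∀ t : ℝ, 0 ≤ t → deriv u t = 2 * u t * (1 - u t) ^ 3) (h0 : 0 < u 0) :
    Tendsto u atTop (nhds 1) := by
  obtain ⟨c, hc, hc_lt⟩ := exists_between (lt_min h0 one_pos)
  obtain ⟨hc0, hc1⟩ := lt_min_iff.mp hc_lt
  set K : ℝ := (1 - u 0) ^ 2 + 1 / c with hK
  have hKpos : 0 < K := by positivity
  have hcK : 1 < 4 * c * K := by
    have : 4 * c * K = 4 * c * (1 - u 0) ^ 2 + 4 := by rw [hK]; field_simp
    rw [this]
    have : 0 ≤ 4 * c * (1 - u 0) ^ 2 := by positivity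
    linarith
  have h0K : (1 - u 0) ^ 2 ≤ K := le_add_of_nonneg_right (by positivity)
  have hsq : Tendsto (fun t => (1 - u t) ^ 2) atTop (nhds 0) := by
    refine squeeze_zero' (Eventually.of_forall fun t => sq_nonneg _) ?_
      ((tendsto_atTop_add_const_left atTop (1 : ℝ) tendsto_id).const_div_atTop K)
    filter_upwards [eventually_ge_atTop 0] with t ht
    exact one_sub_sq_le_div_of_deriv_eq hd hu
      (fun s hs => le_of_deriv_eq_two_mul_mul_one_sub_pow hd hu hc hc1 hc0.le hs)
      hKpos hcK h0K ht
  have habs : Tendsto (fun t => |1 - u t|) atTop (nhds 0) := by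
    simpa [Real.sqrt_sq_eq_abs] using hsq.sqrt
  simpa using ((tendsto_zero_iff_abs_tendsto_zero _).mpr habs).const_sub 1

/-- along any differentiable solution of system (19), u = x² + y² satisfies
u' = 2u(1 − u)³; moreover any differentiable u with u' = 2u(1 − u)³ for t ≥ 0 and u(0) > 0
tends to 1 as t → +∞. -/
theorem stmt_19 (β : ℝ) :
    (∀ x y z : ℝ → ℝ,
      (∀ t : ℝ, HasDerivAt x (y t + x t * (1 - x t ^ 2 - y t ^ 2) ^ 3) t) →
      (∀ t : ℝ, HasDerivAt y (-x t + y t * (1 - x t ^ 2 - y t ^ 2) ^ 3) t) →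
      (∀ t : ℝ, HasDerivAt z (β ^ 2 * z t - z t ^ 3) t) →
      ∀ t : ℝ, HasDerivAt (fun t => x t ^ 2 + y t ^ 2)
        (2 * (x t ^ 2 + y t ^ 2) * (1 - (x t ^ 2 + y t ^ 2)) ^ 3) t) ∧
    (∀ u : ℝ → ℝ, Differentiable ℝ u →
      (∀ t : ℝ, 0 ≤ t → deriv u t = 2 * u t * (1 - u t) ^ 3) →
      0 < u 0 → Tendsto u atTop (nhds 1)) := by
  refine ⟨fun x y z hx hy _ t => ?_,
    fun u hd hu h0 => tendsto_one_of_deriv_eq_two_mul_mul_one_sub_pow hd hu h0⟩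
  refine (((hx t).fun_pow 2).fun_add ((hy t).fun_pow 2)).congr_deriv ?_
  push_cast
  ring
end
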